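/- arXiv:2507.09496 — 2 statements merged into one kernel-verified Lean document; each statement's English description precedes it below -/
import Mathlib

section
/- Let (X_i)_{i≥1} be i.i.d. standard normal and X_{(n)} = max_{1≤i≤n} X_i. Let a_n = √(2 log n), c_n = log(√(4π log n)), and b_n = a_n - c_n/a_n - (c_n² - 2c_n)/(2a_n³). Then, as n → ∞, sup_{x∈ℝ} |P(X_{(n)} ≤ b_n + x/a_n) - exp(-e^{-x})| = (d₂ log log n/(4 log n))(1 + o(1)), where d₂ = sup_{x∈ℝ} |x| exp(-e^{-x}) e^{-x}. -/
open MeasureTheory Filter Real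

/-- The standard normal cumulative distribution function. -/
noncomputable def stdNormalCDF (x : ℝ) : ℝ :=
  ∫ t in Set.Iic x, Real.exp (-t ^ 2 / 2) / Real.sqrt (2 * Real.pi)

/-- The standard normal density. -/
noncomputable def stdNormalPDF (x : ℝ) : ℝ :=
  Real.exp (-x ^ 2 / 2) / Real.sqrt (2 * Real.pi)

/-- Scaling constant `a_n = √(2 log n)`. -/
noncomputable def aSeq (n : ℕ) : ℝ := Real.sqrt (2 * Real.log n)

/-- Centering constant
`b_n = √(2 log n) - (log log n + log (4π)) / (2 √(2 log n))`. -/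
noncomputable def bSeq (n : ℕ) : ℝ :=
  aSeq n - (Real.log (Real.log n) + Real.log (4 * Real.pi)) / (2 * aSeq n)

/-- `c_n = log (√(4 π log n))`. -/
noncomputable def cSeq (n : ℕ) : ℝ := Real.log (Real.sqrt (4 * Real.pi * Real.log n))

/-- The CDF of `Y_n = a_n (X_{(n)} - b_n)` where `X_{(n)}` is the maximum of `n`
i.i.d. standard normal random variables: `P(Y_n ≤ x) = Φ(b_n + x/a_n)^n`. -/
noncomputable def Fmax (n : ℕ) (x : ℝ) : ℝ := stdNormalCDF (bSeq n + x / aSeq n) ^ n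

/-- The density of `Y_n = a_n (X_{(n)} - b_n)`:
`f_n(x) = n a_n⁻¹ φ(b_n + x/a_n) Φ(b_n + x/a_n)^{n-1}`. -/
noncomputable def fmax (n : ℕ) (x : ℝ) : ℝ :=
  n * (aSeq n)⁻¹ * stdNormalPDF (bSeq n + x / aSeq n) *
    stdNormalCDF (bSeq n + x / aSeq n) ^ (n - 1)

/-- The density of the standard Gumbel distribution. -/
noncomputable def gumbelPDF (x : ℝ) : ℝ := Real.exp (-x - Real.exp (-x))

/-- Refined centering `b_n = a_n - c_n/a_n - (c_n² - 2c_n)/(2a_n³)`. -/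
noncomputable def bSeq3 (n : ℕ) : ℝ :=
  aSeq n - cSeq n / aSeq n - ((cSeq n) ^ 2 - 2 * cSeq n) / (2 * (aSeq n) ^ 3)


lemma gauss_integrable : Integrable (fun t : ℝ => Real.exp (-t ^ 2 / 2)) := by
  have := integrable_exp_neg_mul_sq (b := 1/2) (by norm_num)
  refine this.congr (Eventually.of_forall fun t => ?_)
  simp only; congr 1; ring

lemma gauss_total : ∫ t : ℝ, Real.exp (-t ^ 2 / 2) = Real.sqrt (2 * Real.pi) := by
  have := integral_gaussian (1/2)
  rw [show Real.pi / (1/2) = 2 * Real.pi by ring] at this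
  rw [← this]
  congr 1; ext t; congr 1; ring

lemma sqrt_two_pi_pos : 0 < Real.sqrt (2 * Real.pi) := by positivity

lemma one_sub_cdf (u : ℝ) : 1 - stdNormalCDF u
    = (∫ t in Set.Ioi u, Real.exp (-t ^ 2 / 2)) / Real.sqrt (2 * Real.pi) := by
  unfold stdNormalCDF
  rw [integral_div]
  have h := intervalIntegral.integral_Iic_add_Ioi (b := u) (μ := volume)
    gauss_integrable.integrableOn gauss_integrable.integrableOn
  rw [gauss_total] at h
  have := sqrt_two_pi_pos
  rw [eq_div_iff this.ne', sub_mul, div_mul_cancel₀ _ this.ne']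
  linarith

lemma cdf_nonneg (u : ℝ) : 0 ≤ stdNormalCDF u := by
  unfold stdNormalCDF
  exact integral_nonneg fun t => by positivity

lemma cdf_le_one (u : ℝ) : stdNormalCDF u ≤ 1 := by
  have := one_sub_cdf u
  have h2 : 0 ≤ (∫ t in Set.Ioi u, Real.exp (-t ^ 2 / 2)) / Real.sqrt (2 * Real.pi) :=
    div_nonneg (integral_nonneg fun t => by positivity) sqrt_two_pi_pos.le
  linarith

lemma cdf_mono : Monotone stdNormalCDF := by
  intro u v huv
  unfold stdNormalCDF
  refine setIntegral_mono_set (gauss_integrable.div_const _).integrableOn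
    (Eventually.of_forall fun t => by positivity) ?_
  exact (Set.Iic_subset_Iic.2 huv).eventuallyLE

lemma gauss_tendsto : Tendsto (fun t : ℝ => Real.exp (-t ^ 2 / 2)) atTop (nhds 0) := by
  refine Real.tendsto_exp_atBot.comp ?_
  have : Tendsto (fun t : ℝ => t ^ 2 / 2) atTop atTop :=
    (tendsto_pow_atTop (by norm_num)).atTop_div_const (by norm_num)
  refine (tendsto_neg_atTop_atBot.comp this).congr fun t => ?_
  simp only [Function.comp]; ring

lemma gauss_deriv (t : ℝ) : HasDerivAt (fun t : ℝ => Real.exp (-t ^ 2 / 2))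
    (-t * Real.exp (-t ^ 2 / 2)) t := by
  have h : HasDerivAt (fun t : ℝ => -t ^ 2 / 2) (-t) t := by
    have := ((hasDerivAt_pow 2 t).neg).div_const 2
    exact this.congr_deriv (by push_cast; ring)
  exact h.exp.congr_deriv (by ring)

lemma mills_upper (u : ℝ) (hu : 2 ≤ u) :
    (∫ t in Set.Ioi u, Real.exp (-t ^ 2 / 2)) ≤ Real.exp (-u ^ 2 / 2) / u := by
  have hd : ∀ t ∈ Set.Ici u, HasDerivAt (fun t : ℝ => -Real.exp (-t ^ 2 / 2))
      (t * Real.exp (-t ^ 2 / 2)) t := fun t _ => by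
    exact (gauss_deriv t).neg.congr_deriv (by ring)
  have hp : ∀ t ∈ Set.Ioi u, 0 ≤ t * Real.exp (-t ^ 2 / 2) := fun t ht => by
    have : u < t := ht
    have : 0 < t := by linarith
    positivity
  have ht : Tendsto (fun t : ℝ => -Real.exp (-t ^ 2 / 2)) atTop (nhds 0) := by
    simpa using gauss_tendsto.neg
  have h1 := integrableOn_Ioi_deriv_of_nonneg' hd hp ht
  have h2 := integral_Ioi_of_hasDerivAt_of_nonneg' hd hp ht
  rw [le_div_iff₀ (by linarith), mul_comm, ← integral_const_mul]
  calc _ ≤ ∫ t in Set.Ioi u, t * Real.exp (-t ^ 2 / 2) := by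
        refine setIntegral_mono_on (gauss_integrable.const_mul u).integrableOn h1
          measurableSet_Ioi fun t ht => ?_
        have : u < t := ht
        gcongr
    _ = _ := by rw [h2]; ring

lemma mills_lower (u : ℝ) (hu : 2 ≤ u) :
    Real.exp (-u ^ 2 / 2) / u * (1 - 1 / u ^ 2) ≤ ∫ t in Set.Ioi u, Real.exp (-t ^ 2 / 2) := by
  have hd : ∀ t ∈ Set.Ici u, HasDerivAt
      (fun t : ℝ => -(Real.exp (-t ^ 2 / 2) * (t⁻¹ - t⁻¹ ^ 3)))
      ((1 - 3 * t⁻¹ ^ 4) * Real.exp (-t ^ 2 / 2)) t := fun t ht => by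
    have : u ≤ t := ht
    have h0 : t ≠ 0 := by linarith
    have h1 := hasDerivAt_inv h0
    have h2 := ((gauss_deriv t).mul (h1.sub (h1.pow 3))).neg
    refine h2.congr_deriv ?_
    push_cast
    simp only [Pi.sub_apply, Pi.pow_apply]
    field_simp
    ring
  have hp : ∀ t ∈ Set.Ioi u, 0 ≤ (1 - 3 * t⁻¹ ^ 4) * Real.exp (-t ^ 2 / 2) := fun t ht => by
    have : u < t := ht
    have h1 : t⁻¹ ≤ 1 / 2 := by
      rw [inv_le_comm₀ (by linarith) (by norm_num)]; linarith
    have h3 : 0 ≤ t⁻¹ := by have : 0 < t := by linarith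
                            positivity
    have h2 : t⁻¹ ^ 4 ≤ (1 / 2) ^ 4 := by gcongr
    have : 0 ≤ 1 - 3 * t⁻¹ ^ 4 := by norm_num at h2 ⊢; linarith
    positivity
  have ht : Tendsto (fun t : ℝ => -(Real.exp (-t ^ 2 / 2) * (t⁻¹ - t⁻¹ ^ 3))) atTop (nhds 0) := by
    have h1 := tendsto_inv_atTop_zero (𝕜 := ℝ)
    simpa using (gauss_tendsto.mul (h1.sub (h1.pow 3))).neg
  have h1 := integrableOn_Ioi_deriv_of_nonneg' hd hp ht
  have h2 := integral_Ioi_of_hasDerivAt_of_nonneg' hd hp ht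
  calc _ = ∫ t in Set.Ioi u, (1 - 3 * t⁻¹ ^ 4) * Real.exp (-t ^ 2 / 2) := by
        rw [h2]
        have : u ≠ 0 := by linarith
        field_simp
        ring
    _ ≤ _ := by
        refine setIntegral_mono_on h1 gauss_integrable.integrableOn
          measurableSet_Ioi fun t ht => ?_
        have : 0 ≤ t⁻¹ ^ 4 := by positivity
        have := Real.exp_pos (-t ^ 2 / 2)
        nlinarith

/-- Standard bound for `t² e^{-t}`. -/
lemma sq_mul_exp_neg (t : ℝ) (ht : 0 ≤ t) : t ^ 2 * Real.exp (-t) ≤ 2 := by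
  have := Real.quadratic_le_exp_of_nonneg ht
  rw [Real.exp_neg, ← div_eq_mul_inv, div_le_iff₀ (Real.exp_pos t)]
  nlinarith

lemma pow_approx (n : ℕ) (hn : 1 ≤ n) (p : ℝ) (hp0 : 0 ≤ p) (hp1 : p ≤ 1) :
    |p ^ n - Real.exp (-(n * (1 - p)))| ≤ 2 / n := by
  have hn' : (0 : ℝ) < n := by exact_mod_cast hn
  set q := 1 - p with hq
  have hpq : p = 1 - q := by rw [hq]; ring
  have hq0 : 0 ≤ q := by linarith
  have up : p ^ n ≤ Real.exp (-(n * q)) := by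
    have : p ≤ Real.exp (-q) := by have := Real.add_one_le_exp (-q); linarith
    calc p ^ n ≤ Real.exp (-q) ^ n := by gcongr
      _ = _ := by rw [← Real.exp_nat_mul]; congr 1; ring
  have lo : Real.exp (-(n * q)) * (1 - n * q ^ 2) ≤ p ^ n := by
    have h1 : (1 + q) ^ n ≤ Real.exp (n * q) := by
      rw [Real.exp_nat_mul]
      have := Real.add_one_le_exp q
      gcongr; linarith
    have h2 : 1 - n * q ^ 2 ≤ (1 - q ^ 2) ^ n := by
      have := one_add_mul_le_pow (a := -q ^ 2) (by nlinarith) n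
      calc _ = 1 + (n : ℝ) * -q ^ 2 := by ring
        _ ≤ _ := this
        _ = _ := by ring
    calc Real.exp (-(n * q)) * (1 - n * q ^ 2) ≤ Real.exp (-(n * q)) * (1 - q ^ 2) ^ n := by gcongr
      _ = Real.exp (-(n * q)) * ((1 + q) ^ n * p ^ n) := by
          rw [← mul_pow, hpq]; ring
      _ ≤ Real.exp (-(n * q)) * (Real.exp (n * q) * p ^ n) := by gcongr
      _ = p ^ n := by rw [← mul_assoc, ← Real.exp_add]; simp
  have h3 := sq_mul_exp_neg (n * q) (by positivity)
  have h4 : Real.exp (-(n * q)) * (n * q ^ 2) ≤ 2 / n := by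
    rw [le_div_iff₀ hn']
    linarith
  rw [abs_le]
  constructor
  · nlinarith
  · have : 0 ≤ 2 / (n : ℝ) := by positivity
    linarith

noncomputable def gum (x : ℝ) : ℝ := Real.exp (-Real.exp (-x))
noncomputable def gumD (x : ℝ) : ℝ := Real.exp (-Real.exp (-x)) * Real.exp (-x)

lemma sq_mul_exp_neg' (t : ℝ) (ht : 0 ≤ t) : t ^ 2 * Real.exp (-t) ≤ 2 := by
  have := Real.quadratic_le_exp_of_nonneg ht
  rw [Real.exp_neg, ← div_eq_mul_inv, div_le_iff₀ (Real.exp_pos t)]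
  nlinarith

lemma gum_hasDeriv (x : ℝ) : HasDerivAt gum (gumD x) x := by
  unfold gum gumD
  have h1 : HasDerivAt (fun x : ℝ => -Real.exp (-x)) (Real.exp (-x)) x := by
    exact ((hasDerivAt_neg x).exp).neg.congr_deriv (by ring)
  exact h1.exp

lemma gumD_hasDeriv (x : ℝ) : HasDerivAt gumD (gumD x * (Real.exp (-x) - 1)) x := by
  have h1 : HasDerivAt (fun x : ℝ => Real.exp (-x)) (-Real.exp (-x)) x := by
    exact ((hasDerivAt_neg x).exp).congr_deriv (by ring)
  have := (gum_hasDeriv x).mul h1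
  refine this.congr_deriv ?_
  unfold gum gumD; ring

lemma gumD_pos (x : ℝ) : 0 < gumD x := by unfold gumD; positivity

lemma gumD_deriv_bound (x : ℝ) : |gumD x * (Real.exp (-x) - 1)| ≤ 3 := by
  unfold gumD
  set t := Real.exp (-x)
  have ht : 0 < t := Real.exp_pos _
  have h1 := sq_mul_exp_neg' t ht.le
  have h2 : t * Real.exp (-t) ≤ 1 := by
    rw [Real.exp_neg, ← div_eq_mul_inv, div_le_iff₀ (Real.exp_pos t)]
    have := Real.add_one_le_exp t; linarith
  have h3 := Real.exp_pos (-t)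
  have h4 : 0 ≤ t * Real.exp (-t) := by positivity
  have h5 : 0 ≤ t ^ 2 * Real.exp (-t) := by positivity
  rw [abs_le]; constructor <;> nlinarith

lemma gumD_lip (x y : ℝ) : |gumD y - gumD x| ≤ 3 * |y - x| := by
  have := Convex.norm_image_sub_le_of_norm_hasDerivWithin_le (f := gumD) (s := Set.univ) (C := 3)
    (x := x) (y := y) (fun z _ => (gumD_hasDeriv z).hasDerivWithinAt)
    (fun z _ => gumD_deriv_bound z) convex_univ (Set.mem_univ _) (Set.mem_univ _)
  simpa using this

lemma gum_taylor (x h : ℝ) : |gum (x - h) - gum x + h * gumD x| ≤ 3 * h ^ 2 := by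
  have hd : ∀ s : ℝ, HasDerivAt (fun s => gum (x - s) + s * gumD x)
      (-gumD (x - s) + gumD x) s := fun s => by
    have h1 : HasDerivAt (fun s => x - s) (-1) s := by
      simpa using (hasDerivAt_id s).const_sub x
    have h2 := (gum_hasDeriv (x - s)).comp s h1
    have h3 := (hasDerivAt_id s).mul_const (gumD x)
    exact (h2.add h3).congr_deriv (by ring)
  have := Convex.norm_image_sub_le_of_norm_hasDerivWithin_le
    (f := fun s => gum (x - s) + s * gumD x) (s := Set.uIcc 0 h) (C := 3 * |h|)
    (x := 0) (y := h) (fun z _ => (hd z).hasDerivWithinAt)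
    (fun z hz => by
      have h1 := gumD_lip (x - z) x
      have h2 : |z| ≤ |h| := by
        have := Set.abs_sub_left_of_mem_uIcc hz
        simpa using this
      rw [Real.norm_eq_abs, neg_add_eq_sub]
      refine h1.trans ?_
      rw [show x - (x - z) = z by ring]
      linarith) (convex_uIcc _ _) Set.left_mem_uIcc Set.right_mem_uIcc
  simp only [Real.norm_eq_abs, sub_zero, zero_mul, add_zero] at this
  rw [mul_assoc, abs_mul_abs_self] at this
  rw [show gum (x - h) - gum x + h * gumD x = gum (x - h) + h * gumD x - gum x by ring]
  linarith [sq h]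

lemma gumD_le (x : ℝ) : gumD x ≤ 2 * Real.exp (-|x|) := by
  unfold gumD
  rcases le_total 0 x with h | h
  · rw [abs_of_nonneg h]
    have h1 : Real.exp (-Real.exp (-x)) ≤ 1 := Real.exp_le_one_iff.2 (by have := Real.exp_pos (-x); linarith)
    have := Real.exp_pos (-x)
    nlinarith
  · rw [abs_of_nonpos h, neg_neg]
    set t := Real.exp (-x) with ht
    have ht0 : 0 < t := Real.exp_pos _
    have h1 := sq_mul_exp_neg' t ht0.le
    have h2 : Real.exp x = t⁻¹ := by rw [ht, Real.exp_neg, inv_inv]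
    rw [h2, ← div_eq_mul_inv, le_div_iff₀ ht0]
    linarith

lemma gumD_sq_bound (x : ℝ) : (1 + x ^ 2) * gumD x ≤ 6 := by
  have h1 := gumD_le x
  have h2 := Real.quadratic_le_exp_of_nonneg (abs_nonneg x)
  rw [sq_abs] at h2
  have h3 : (1 + x ^ 2) * Real.exp (-|x|) ≤ 3 := by
    rw [Real.exp_neg, ← div_eq_mul_inv, div_le_iff₀ (Real.exp_pos _)]
    nlinarith [abs_nonneg x]
  nlinarith [sq_nonneg x]

lemma core_alg (a c x : ℝ) (hc : 2 ≤ c) (hca : c ^ 4 ≤ a ^ 2) (ha : 0 < a)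
    (hx : |x| ≤ 2 * c) (q η r : ℝ) (hη : η = (c ^ 2 - 2 * c) / (2 * a ^ 2))
    (hq : q = x - c - η) (hr : r = q / a ^ 2) :
    |r| ≤ 1 / 2 ∧ r ^ 2 ≤ 16 / a ^ 2 ∧
    |η - q ^ 2 / (2 * a ^ 2) - x * c / a ^ 2 - r| ≤ (x ^ 2 + 11) / a ^ 2 := by
  have ha2 : 0 < a ^ 2 := by positivity
  obtain ⟨hx1, hx2⟩ := abs_le.1 hx
  have c2 : 4 ≤ c ^ 2 := by nlinarith
  have c3 : 8 * c ≤ c ^ 4 := by nlinarith [mul_le_mul c2 c2 (by norm_num) (by positivity)]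
  have c4 : c ^ 3 ≤ a ^ 2 := by nlinarith [pow_pos (show 0 < c by linarith) 3]
  have c5 : c ^ 2 ≤ a ^ 2 := by nlinarith
  have e0 : 0 ≤ η := by
    rw [hη]; apply div_nonneg <;> nlinarith
  have e1 : η * a ^ 2 ≤ c ^ 2 / 2 := by
    rw [hη]; field_simp; nlinarith
  have e2 : η ≤ 1 / 2 := by nlinarith
  have e3 : η * c ≤ 1 / 2 := by
    have : η * c * a ^ 2 ≤ c ^ 3 / 2 := by nlinarith
    nlinarith
  have q1 : |q| ≤ 4 * c := by
    rw [abs_le, hq]; constructor <;> linarith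
  have q2 : q ^ 2 ≤ 16 * c ^ 2 := by
    have := sq_le_sq' (abs_le.1 q1).1 (abs_le.1 q1).2
    nlinarith
  refine ⟨?_, ?_, ?_⟩
  · rw [hr, abs_div, abs_of_pos ha2, div_le_iff₀ ha2]; linarith
  · rw [hr, div_pow, div_le_div_iff₀ (by positivity) ha2]
    have := mul_le_mul_of_nonneg_right q2 ha2.le
    have := mul_le_mul_of_nonneg_right c5 ha2.le
    linarith [show a ^ 2 * a ^ 2 = (a ^ 2) ^ 2 by ring]
  · have key : η - q ^ 2 / (2 * a ^ 2) - x * c / a ^ 2 - r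
        = (-x ^ 2 - 2 * x + 2 * η * (x - c) - η ^ 2 + 2 * η) / (2 * a ^ 2) := by
      have h1 : 2 * a ^ 2 * η = c ^ 2 - 2 * c := by rw [hη]; field_simp
      rw [hr, hq]; field_simp
      linear_combination h1
    rw [key, abs_div, abs_of_pos (show 0 < 2 * a ^ 2 by positivity),
      div_le_div_iff₀ (by positivity) ha2]
    have : |-x ^ 2 - 2 * x + 2 * η * (x - c) - η ^ 2 + 2 * η| ≤ 2 * (x ^ 2 + 11) := by
      have m1 : η * x ≤ 1 := by nlinarith
      have m2 : -1 ≤ η * x := by nlinarith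
      have m3 : 0 ≤ η * c := mul_nonneg e0 (by linarith)
      have m4 : η ^ 2 ≤ 1 / 4 := by nlinarith
      rw [abs_le]; constructor <;> nlinarith only [m1, m2, m3, m4, e3, e2, e0, sq_nonneg (x - 1), sq_nonneg (x + 1), sq_nonneg η]
    calc _ ≤ (2 * (x ^ 2 + 11)) * a ^ 2 := by gcongr
      _ = _ := by ring

lemma inv_one_sub_le (y : ℝ) (h0 : 0 < y) (h1 : y ≤ 1 / 2) : (1 - y)⁻¹ ≤ 1 + 2 * y := by
  rw [inv_le_iff_one_le_mul₀ (by linarith)]; nlinarith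

lemma inv_one_add_le (r : ℝ) (h0 : -(1 / 2) ≤ r) : (1 + r)⁻¹ ≤ 1 - r + 2 * r ^ 2 := by
  rw [inv_le_iff_one_le_mul₀ (by linarith)]; nlinarith [mul_nonneg (sq_nonneg r) (show 0 ≤ 1 + 2 * r by linarith)]

lemma core_tail (a c x u : ℝ) (hc : 2 ≤ c) (hca : c ^ 4 ≤ a ^ 2) (ha : 0 < a)
    (hexp : Real.exp c = Real.sqrt (2 * Real.pi) * a)
    (hx : |x| ≤ 2 * c) (hu : u = a - c / a - (c ^ 2 - 2 * c) / (2 * a ^ 3) + x / a) :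
    ∃ h, Real.exp (a ^ 2 / 2) * (1 - stdNormalCDF u) = Real.exp (-x + h) ∧
      |h - x * c / a ^ 2| ≤ 60 * (1 + x ^ 2) / a ^ 2 := by
  obtain ⟨η, hη⟩ : ∃ η, η = (c ^ 2 - 2 * c) / (2 * a ^ 2) := ⟨_, rfl⟩
  obtain ⟨q, hq⟩ : ∃ q, q = x - c - η := ⟨_, rfl⟩
  obtain ⟨r, hr⟩ : ∃ r, r = q / a ^ 2 := ⟨_, rfl⟩
  obtain ⟨r1, r2, r3⟩ := core_alg a c x hc hca ha hx q η r hη hq hr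
  obtain ⟨r1a, r1b⟩ := abs_le.1 r1
  have ha2 : 0 < a ^ 2 := by positivity
  have hur : u = a * (1 + r) := by
    rw [hu, hr, hq, hη]; field_simp; ring
  have ha4 : 4 ≤ a := by
    have c2 : 4 ≤ c ^ 2 := by nlinarith
    have c3 : 16 ≤ c ^ 4 := by nlinarith
    nlinarith
  have huh : a / 2 ≤ u := by rw [hur]; nlinarith
  have hu2 : 2 ≤ u := by linarith
  have hu0 : 0 < u := by linarith
  have hlo := mills_lower u hu2
  have hup := mills_upper u hu2
  have hs := sqrt_two_pi_pos
  have hr0 : 0 < 1 + r := by linarith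
  obtain ⟨h0, hh0⟩ : ∃ h0, h0 = η - q ^ 2 / (2 * a ^ 2) - Real.log (1 + r) := ⟨_, rfl⟩
  have hP : Real.exp (a ^ 2 / 2) * (Real.exp (-u ^ 2 / 2) / u / Real.sqrt (2 * Real.pi))
      = Real.exp (-x + h0) := by
    have e1 : u * Real.sqrt (2 * Real.pi) = Real.exp (c + Real.log (1 + r)) := by
      rw [Real.exp_add, hexp, Real.exp_log hr0, hur]; ring
    rw [div_div, e1, ← Real.exp_sub, ← Real.exp_add]
    congr 1
    have e2 : q = a ^ 2 * r := by rw [hr]; field_simp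
    have e3 : q ^ 2 / (2 * a ^ 2) = a ^ 2 * r ^ 2 / 2 := by rw [e2]; field_simp
    rw [hh0, e3, hur]
    have e4 : η = x - c - a ^ 2 * r := by linarith
    rw [e4]; ring
  have hy : 1 / u ^ 2 ≤ 4 / a ^ 2 := by
    rw [div_le_div_iff₀ (by positivity) ha2]; nlinarith
  have hy2 : 1 / u ^ 2 ≤ 1 / 2 := by
    rw [div_le_div_iff₀ (by positivity) (by norm_num)]; nlinarith
  have hy0 : 0 < 1 / u ^ 2 := by positivity
  obtain ⟨T, hT⟩ : ∃ T, T = Real.exp (a ^ 2 / 2) * (1 - stdNormalCDF u) := ⟨_, rfl⟩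
  have hTup : T ≤ Real.exp (-x + h0) := by
    rw [hT, ← hP, one_sub_cdf]; gcongr
  have hTlo : Real.exp (-x + h0) * (1 - 1 / u ^ 2) ≤ T := by
    rw [hT, ← hP, one_sub_cdf]
    calc _ = Real.exp (a ^ 2 / 2) * ((Real.exp (-u ^ 2 / 2) / u * (1 - 1 / u ^ 2))
              / Real.sqrt (2 * Real.pi)) := by ring
      _ ≤ _ := by gcongr
  have hTpos : 0 < T := lt_of_lt_of_le (mul_pos (Real.exp_pos _) (by linarith)) hTlo
  have l1 : Real.log T ≤ -x + h0 := by
    rw [← Real.log_exp (-x + h0)]; exact Real.log_le_log hTpos hTup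
  have l2 : -x + h0 + Real.log (1 - 1 / u ^ 2) ≤ Real.log T := by
    have := Real.log_le_log (mul_pos (Real.exp_pos _) (by linarith)) hTlo
    rwa [Real.log_mul (Real.exp_pos _).ne' (by linarith), Real.log_exp] at this
  have l3 : -(8 / a ^ 2) ≤ Real.log (1 - 1 / u ^ 2) := by
    have := Real.one_sub_inv_le_log_of_pos (show 0 < 1 - 1 / u ^ 2 by linarith)
    have h5 : (1 - 1 / u ^ 2)⁻¹ ≤ 1 + 2 * (1 / u ^ 2) := inv_one_sub_le _ hy0 hy2
    have : 8 / a ^ 2 = 2 * (4 / a ^ 2) := by ring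
    linarith
  have l4 : Real.log (1 + r) ≤ r := by
    have := Real.log_le_sub_one_of_pos hr0; linarith
  have l5 : r - 32 / a ^ 2 ≤ Real.log (1 + r) := by
    have := Real.one_sub_inv_le_log_of_pos hr0
    have h5 : (1 + r)⁻¹ ≤ 1 - r + 2 * r ^ 2 := inv_one_add_le r (by linarith)
    have : 32 / a ^ 2 = 2 * (16 / a ^ 2) := by ring
    linarith
  refine ⟨Real.log T + x, ?_, ?_⟩
  · rw [← hT, neg_add_cancel_comm_assoc, Real.exp_log hTpos]
  · obtain ⟨m1, m2⟩ := abs_le.1 r3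
    have e : 60 * (1 + x ^ 2) / a ^ 2 = (x ^ 2 + 11) / a ^ 2 + 32 / a ^ 2 + 8 / a ^ 2
        + (9 + 59 * x ^ 2) / a ^ 2 := by ring
    have : 0 ≤ (9 + 59 * x ^ 2) / a ^ 2 := by positivity
    have : 0 ≤ 32 / a ^ 2 := by positivity
    have : 0 ≤ 8 / a ^ 2 := by positivity
    rw [abs_le, e]
    constructor <;> linarith

/-- Middle range estimate. -/
lemma middle (n : ℕ) (hn : 1 ≤ n) (a c x u : ℝ) (hc : 2 ≤ c) (hca : c ^ 4 ≤ a ^ 2) (ha : 0 < a)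
    (hexp : Real.exp c = Real.sqrt (2 * Real.pi) * a) (hna : Real.exp (a ^ 2 / 2) = n)
    (hx : |x| ≤ 2 * c) (hu : u = a - c / a - (c ^ 2 - 2 * c) / (2 * a ^ 3) + x / a) :
    |stdNormalCDF u ^ n - gum x + c / a ^ 2 * (x * gumD x)| ≤ 300000 / a ^ 2 := by
  obtain ⟨h, h1, h2⟩ := core_tail a c x u hc hca ha hexp hx hu
  have ha2 : 0 < a ^ 2 := by positivity
  have p1 := pow_approx n hn _ (cdf_nonneg u) (cdf_le_one u)
  rw [← hna, h1] at p1
  have p2 := gum_taylor x h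
  have e1 : Real.exp (-Real.exp (-x + h)) = gum (x - h) := by
    unfold gum; congr 3; ring
  rw [e1] at p1
  have p3 : 2 / Real.exp (a ^ 2 / 2) ≤ 4 / a ^ 2 := by
    rw [div_le_div_iff₀ (Real.exp_pos _) ha2]
    have := Real.add_one_le_exp (a ^ 2 / 2); linarith
  have p4 : |(h - x * c / a ^ 2) * gumD x| ≤ 360 / a ^ 2 := by
    rw [abs_mul, abs_of_pos (gumD_pos x)]
    calc _ ≤ 60 * (1 + x ^ 2) / a ^ 2 * gumD x := by
          have := (gumD_pos x).le
          gcongr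
      _ = 60 * ((1 + x ^ 2) * gumD x) / a ^ 2 := by ring
      _ ≤ 60 * 6 / a ^ 2 := by have := gumD_sq_bound x
                               gcongr
      _ = _ := by norm_num
  have hh : |h| ≤ 302 * c ^ 2 / a ^ 2 := by
    have x2 : x ^ 2 ≤ 4 * c ^ 2 := by
      have := sq_le_sq' (abs_le.1 hx).1 (abs_le.1 hx).2
      nlinarith
    have h3 : |x * c / a ^ 2| ≤ 2 * c ^ 2 / a ^ 2 := by
      rw [abs_div, abs_mul, abs_of_pos ha2, abs_of_pos (show 0 < c by linarith)]
      rw [sq c, ← mul_assoc]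
      gcongr
    have h4 : 60 * (1 + x ^ 2) / a ^ 2 ≤ 300 * c ^ 2 / a ^ 2 := by
      have : 60 * (1 + x ^ 2) ≤ 300 * c ^ 2 := by nlinarith
      gcongr
    have h5 : 302 * c ^ 2 / a ^ 2 = 2 * c ^ 2 / a ^ 2 + 300 * c ^ 2 / a ^ 2 := by ring
    have := abs_add_le (h - x * c / a ^ 2) (x * c / a ^ 2)
    rw [sub_add_cancel] at this
    linarith
  have p5 : h ^ 2 ≤ 91204 / a ^ 2 := by
    calc h ^ 2 = |h| ^ 2 := (sq_abs h).symm
      _ ≤ (302 * c ^ 2 / a ^ 2) ^ 2 := by gcongr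
      _ = 91204 * c ^ 4 / (a ^ 2 * a ^ 2) := by ring
      _ ≤ 91204 * a ^ 2 / (a ^ 2 * a ^ 2) := by gcongr
      _ = _ := by field_simp
  have p6 : |stdNormalCDF u ^ n - gum x + c / a ^ 2 * (x * gumD x)| =
    |(stdNormalCDF u ^ n - gum (x - h)) + (gum (x - h) - gum x + h * gumD x)
      + -((h - x * c / a ^ 2) * gumD x)| := by congr 1; ring
  rw [p6]
  refine (abs_add_three _ _ _).trans ?_
  rw [abs_neg]
  have : 300000 / a ^ 2 = 4 / a ^ 2 + 3 * (91204 / a ^ 2) + 360 / a ^ 2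
    + 26024 / a ^ 2 := by ring
  have : 0 ≤ 26024 / a ^ 2 := by positivity
  linarith

lemma gum_mono : Monotone gum := by
  intro x y h; unfold gum
  gcongr

lemma gum_pos (x : ℝ) : 0 < gum x := Real.exp_pos _

lemma gum_le_one (x : ℝ) : gum x ≤ 1 := by
  unfold gum; exact Real.exp_le_one_iff.2 (by have := Real.exp_pos (-x); linarith)

lemma abs_gumD_le (K x : ℝ) (hK : 0 < K) (hx : K ≤ |x|) : |x * gumD x| ≤ 6 / K := by
  rw [abs_mul, abs_of_pos (gumD_pos x), le_div_iff₀ hK]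
  have := gumD_sq_bound x
  have h1 := gumD_pos x
  rw [← sq_abs] at this
  nlinarith [mul_nonneg (mul_nonneg (abs_nonneg x) h1.le) (sub_nonneg.2 hx)]

lemma uniform_bound (n : ℕ) (hn : 1 ≤ n) (a c : ℝ) (hc : 2 ≤ c) (hca : c ^ 4 ≤ a ^ 2) (ha : 0 < a)
    (hexp : Real.exp c = Real.sqrt (2 * Real.pi) * a) (hna : Real.exp (a ^ 2 / 2) = n) (x : ℝ) :
    |stdNormalCDF (a - c / a - (c ^ 2 - 2 * c) / (2 * a ^ 3) + x / a) ^ n - gum x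
      + c / a ^ 2 * (x * gumD x)| ≤ 400000 / a ^ 2 := by
  have ha2 : 0 < a ^ 2 := by positivity
  have hmid := fun y hy => middle n hn a c y _ hc hca ha hexp hna hy rfl
  have hc0 : 0 < c := by linarith
  set F : ℝ → ℝ := fun y => stdNormalCDF (a - c / a - (c ^ 2 - 2 * c) / (2 * a ^ 3) + y / a) ^ n
    with hF
  have Fmono : Monotone F := by
    intro y z hyz
    simp only [hF]
    have := cdf_nonneg (a - c / a - (c ^ 2 - 2 * c) / (2 * a ^ 3) + y / a)
    gcongr
    apply cdf_mono
    gcongr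
  have F0 : ∀ y, 0 ≤ F y := fun y => pow_nonneg (cdf_nonneg _) _
  have F1 : ∀ y, F y ≤ 1 := fun y => pow_le_one₀ (cdf_nonneg _) (cdf_le_one _)
  change |F x - gum x + _| ≤ _
  change ∀ y, |y| ≤ 2 * c → |F y - gum y + _| ≤ _ at hmid
  have hK : Real.exp (-(2 * c)) ≤ 1 / a ^ 2 := by
    have : Real.exp (2 * c) = 2 * Real.pi * a ^ 2 := by
      rw [show 2 * c = c + c by ring, Real.exp_add, hexp]
      have := Real.mul_self_sqrt (show 0 ≤ 2 * Real.pi by positivity)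
      linear_combination a ^ 2 * this
    rw [Real.exp_neg, this, ← one_div]
    have := Real.pi_gt_three
    apply one_div_le_one_div_of_le ha2
    nlinarith
  have hG : ∀ y, 2 * c ≤ |y| → |c / a ^ 2 * (y * gumD y)| ≤ 3 / a ^ 2 := fun y hy => by
    have := abs_gumD_le (2 * c) y (by linarith) hy
    rw [abs_mul, abs_of_pos (show 0 < c / a ^ 2 by positivity)]
    calc _ ≤ c / a ^ 2 * (6 / (2 * c)) := by gcongr
      _ = _ := by field_simp; norm_num
  have hc2 : |2 * c| = 2 * c := abs_of_pos (by linarith)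
  have hc2' : |-(2 * c)| = 2 * c := by rw [abs_neg, hc2]
  have s0 : 400000 / a ^ 2 = 300000 / a ^ 2 + 2 * (3 / a ^ 2) + 2 * (1 / a ^ 2)
    + 99992 / a ^ 2 := by ring
  have s1 : 0 ≤ 99992 / a ^ 2 := by positivity
  have s2 : 0 ≤ 3 / a ^ 2 := by positivity
  have s3 : 0 ≤ 1 / a ^ 2 := by positivity
  rcases le_total |x| (2 * c) with h | h
  · have := hmid x h
    linarith
  · have g1 := hG x h
    rcases le_total 0 x with h0 | h0
    · rw [abs_of_nonneg h0] at h
      have g2 := hG (2 * c) hc2.ge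
      have m := hmid (2 * c) hc2.le
      have k1 : 1 - Real.exp (-(2 * c)) ≤ gum (2 * c) := by
        have := Real.add_one_le_exp (-Real.exp (-(2 * c)))
        unfold gum; linarith
      have := Fmono h
      have := gum_mono h
      have := F1 x
      have := gum_le_one x
      rw [abs_le] at *
      constructor <;> linarith
    · rw [abs_of_nonpos h0] at h
      have h' : x ≤ -(2 * c) := by linarith
      have g2 := hG (-(2 * c)) hc2'.ge
      have m := hmid (-(2 * c)) hc2'.le
      have k1 : gum (-(2 * c)) ≤ Real.exp (-(2 * c)) := by
        unfold gum
        rw [neg_neg, Real.exp_le_exp]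
        have := Real.add_one_le_exp (2 * c)
        linarith
      have := Fmono h'
      have := gum_mono h'
      have := F0 x
      have := gum_pos x
      rw [abs_le] at *
      constructor <;> linarith

lemma sup_compare (D W : ℝ → ℝ) (ε δ : ℝ) (hε : 0 < ε) (hW : ∀ x, W x ≤ 6)
    (h : ∀ x, |D x - ε * W x| ≤ δ) : |(⨆ x, D x) - ε * ⨆ x, W x| ≤ δ := by
  have bW : BddAbove (Set.range W) := ⟨6, by rintro _ ⟨x, rfl⟩; exact hW x⟩
  have key : ∀ x, D x ≤ ε * (⨆ x, W x) + δ := fun x => by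
    have h1 := le_ciSup bW x
    have h2 := (abs_le.1 (h x)).2
    nlinarith
  have bD : BddAbove (Set.range D) := ⟨_, by rintro _ ⟨x, rfl⟩; exact key x⟩
  have u1 : (⨆ x, D x) ≤ ε * (⨆ x, W x) + δ := ciSup_le key
  have u2 : (⨆ x, W x) ≤ ((⨆ x, D x) + δ) / ε := ciSup_le fun x => by
    rw [le_div_iff₀ hε]
    have h1 := le_ciSup bD x
    have h2 := (abs_le.1 (h x)).1
    linarith
  rw [le_div_iff₀ hε] at u2
  rw [abs_le]; constructor <;> linarith

lemma tendsto_loglog : Tendsto (fun n : ℕ => Real.log (Real.log n)) atTop atTop :=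
  Real.tendsto_log_atTop.comp (Real.tendsto_log_atTop.comp tendsto_natCast_atTop_atTop)

lemma eventually_c : ∀ᶠ c : ℝ in atTop, 2 ≤ c ∧ 2 * Real.pi * c ^ 4 ≤ Real.exp c * Real.exp c := by
  have h1 := (Real.tendsto_pow_mul_exp_neg_atTop_nhds_zero 4).eventually_lt_const one_pos
  have h2 := Real.tendsto_exp_atTop.eventually_ge_atTop (2 * Real.pi)
  filter_upwards [h1, h2, eventually_ge_atTop 2] with c h1 h2 h3
  refine ⟨h3, ?_⟩
  have : c ^ 4 ≤ Real.exp c := by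
    rw [Real.exp_neg, ← div_eq_mul_inv, div_lt_one (Real.exp_pos c)] at h1
    exact h1.le
  have := Real.pi_pos
  gcongr

/-- With the refined centering `b_n = a_n - c_n/a_n - (c_n² - 2c_n)/(2a_n³)`,
`sup_x |P(X_{(n)} ≤ b_n + x/a_n) - exp(-e^{-x})| = (d₂ log log n/(4 log n)) (1 + o(1))`
where `d₂ = sup_x |x| exp(-e^{-x}) e^{-x}`. -/
theorem refined_berryEsseen :
    Tendsto (fun n : ℕ =>
        (⨆ x : ℝ, |stdNormalCDF (bSeq3 n + x / aSeq n) ^ n - Real.exp (-Real.exp (-x))|) /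
          ((⨆ x : ℝ, |x| * Real.exp (-Real.exp (-x)) * Real.exp (-x)) *
            Real.log (Real.log n) / (4 * Real.log n)))
      atTop (nhds 1) := by
  set d : ℝ := ⨆ x : ℝ, |x| * Real.exp (-Real.exp (-x)) * Real.exp (-x) with hd
  have hW : ∀ x : ℝ, |x| * Real.exp (-Real.exp (-x)) * Real.exp (-x) ≤ 6 := fun x => by
    have h1 := gumD_sq_bound x
    have h2 := gumD_pos x
    have h3 : |x| ≤ 1 + x ^ 2 := by rw [← sq_abs]; nlinarith [sq_nonneg (|x| - 1), abs_nonneg x]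
    rw [mul_assoc]
    exact (mul_le_mul_of_nonneg_right h3 h2.le).trans h1
  have hdpos : 0 < d := by
    have h1 := le_ciSup (f := fun x : ℝ => |x| * Real.exp (-Real.exp (-x)) * Real.exp (-x))
      ⟨6, by rintro _ ⟨x, rfl⟩; exact hW x⟩ 1
    refine lt_of_lt_of_le ?_ h1
    simp only [abs_one]
    positivity
  have hcform : ∀ᶠ n : ℕ in atTop,
      cSeq n = (Real.log (4 * Real.pi) + Real.log (Real.log n)) / 2 := by
    filter_upwards [tendsto_loglog.eventually_gt_atTop 0] with n hn
    have hL : Real.log n ≠ 0 := by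
      intro h; rw [h] at hn; simp at hn
    unfold cSeq
    rw [Real.log_sqrt (by
      have : 0 ≤ Real.log n := Real.log_natCast_nonneg n
      positivity), Real.log_mul (by positivity) hL]
  have hctop : Tendsto cSeq atTop atTop := by
    refine Tendsto.congr' (EventuallyEq.symm hcform) ?_
    exact (tendsto_atTop_add_const_left _ _ tendsto_loglog).atTop_div_const (by norm_num)
  set B : ℝ := 800000 / d + Real.log (4 * Real.pi) with hB
  have hlim : Tendsto (fun n : ℕ => B / Real.log (Real.log n)) atTop (nhds 0) :=
    tendsto_loglog.const_div_atTop B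
  rw [tendsto_iff_dist_tendsto_zero]
  refine squeeze_zero' (Eventually.of_forall fun n => dist_nonneg) ?_ hlim
  filter_upwards [hcform, hctop.eventually eventually_c, tendsto_loglog.eventually_gt_atTop 0,
    eventually_ge_atTop 2] with n hcf hc hll hn2
  obtain ⟨hc2, hc4⟩ := hc
  have hL : 0 < Real.log n := Real.log_pos (by exact_mod_cast hn2)
  have hn0 : (0 : ℝ) < n := by positivity
  have ha : 0 < aSeq n := by unfold aSeq; positivity
  have hasq : aSeq n ^ 2 = 2 * Real.log n := by unfold aSeq; exact Real.sq_sqrt (by positivity)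
  have hexp : Real.exp (cSeq n) = Real.sqrt (2 * Real.pi) * aSeq n := by
    unfold cSeq aSeq
    rw [Real.exp_log (by positivity), ← Real.sqrt_mul (by positivity)]
    congr 1; ring
  have hca : cSeq n ^ 4 ≤ aSeq n ^ 2 := by
    rw [hexp] at hc4
    have h1 := Real.mul_self_sqrt (show 0 ≤ 2 * Real.pi by positivity)
    have h2 : Real.sqrt (2 * Real.pi) * aSeq n * (Real.sqrt (2 * Real.pi) * aSeq n)
      = 2 * Real.pi * aSeq n ^ 2 := by linear_combination aSeq n ^ 2 * h1
    rw [h2] at hc4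
    exact le_of_mul_le_mul_left hc4 (by positivity)
  have hna : Real.exp (aSeq n ^ 2 / 2) = n := by
    rw [hasq, mul_div_cancel_left₀ _ (by norm_num), Real.exp_log hn0]
  have hub := uniform_bound n (by omega) (aSeq n) (cSeq n) hc2 hca ha hexp hna
  have hεpos : 0 < cSeq n / aSeq n ^ 2 := by
    have : 0 < cSeq n := by linarith
    positivity
  have hS := sup_compare
    (fun x => |stdNormalCDF (bSeq3 n + x / aSeq n) ^ n - Real.exp (-Real.exp (-x))|)
    (fun x => |x| * Real.exp (-Real.exp (-x)) * Real.exp (-x))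
    (cSeq n / aSeq n ^ 2) (400000 / aSeq n ^ 2) hεpos hW (fun x => by
      refine le_trans ?_ (hub x)
      have e : cSeq n / aSeq n ^ 2 * (|x| * Real.exp (-Real.exp (-x)) * Real.exp (-x))
          = |-(cSeq n / aSeq n ^ 2 * (x * gumD x))| := by
        rw [abs_neg, abs_mul, abs_mul, abs_of_pos hεpos, abs_of_pos (gumD_pos x), mul_assoc]
        rfl
      simp only [e]
      refine (abs_abs_sub_abs_le_abs_sub _ _).trans (le_of_eq ?_)
      rw [sub_neg_eq_add]
      rfl)
  rw [← hd, hasq, hcf] at hS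
  generalize (⨆ x : ℝ, |stdNormalCDF (bSeq3 n + x / aSeq n) ^ n - Real.exp (-Real.exp (-x))|) = S
    at hS ⊢
  generalize Real.log (Real.log n) = l at *
  generalize Real.log n = L at *
  have hlog : 0 ≤ Real.log (4 * Real.pi) :=
    Real.log_nonneg (by have := Real.pi_gt_three; linarith)
  generalize Real.log (4 * Real.pi) = m at *
  have hden : 0 < d * l / (4 * L) := by positivity
  rw [Real.dist_eq, div_sub_one hden.ne', abs_div, abs_of_pos hden, div_le_iff₀ hden]
  have e1 : S - d * l / (4 * L) = (S - (m + l) / 2 / (2 * L) * d) + d * m / (4 * L) := by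
    field_simp; ring
  have e2 : B / l * (d * l / (4 * L)) = 400000 / (2 * L) + d * m / (4 * L) := by
    rw [hB]; field_simp; ring
  rw [e1, e2]
  refine (abs_add_le _ _).trans ?_
  rw [abs_of_nonneg (show 0 ≤ d * m / (4 * L) by positivity)]
  linarith
end

section
/- Let (X_i)_{i≥1} be i.i.d. standard normal and X_{(n)} = max_{1≤i≤n} X_i. Let b_n > 0 satisfy 2π b_n² exp(b_n²) = n² and set Y_n = b_n(X_{(n)} - b_n). Then, as n → ∞, the total variation distance satisfies ‖L(Y_n) - Λ‖_TV = (d₃/(4 log n))(1 + o(1)), where d₃ = ∫_ℝ e^{-x - e^{-x}} |−x² + e^{-x}(x² + 2x + 2)| dx. -/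
open MeasureTheory Filter Real

/-- The scaled tail. -/
noncomputable def TT (β x : ℝ) : ℝ := ∫ y in Set.Ioi x, Real.exp (-y - y ^ 2 / (2 * β))

lemma integrable_phi : Integrable (fun t : ℝ => Real.exp (-t ^ 2 / 2) / Real.sqrt (2 * Real.pi)) := by
  have := (integrable_exp_neg_mul_sq (b := 1/2) (by norm_num)).div_const (Real.sqrt (2 * Real.pi))
  refine this.congr (Eventually.of_forall fun t => ?_)
  simp only
  congr 2; ring

lemma integral_phi : ∫ t : ℝ, Real.exp (-t ^ 2 / 2) / Real.sqrt (2 * Real.pi) = 1 := by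
  have h := integral_gaussian (1/2)
  have h2 : ∀ t : ℝ, -t ^ 2 / 2 = -(1/2) * t ^ 2 := fun t => by ring
  simp only [h2]
  rw [integral_div, h]
  have : π / (1/2) = 2 * π := by ring
  rw [this, div_self]
  positivity

lemma n_eq {b : ℝ} {n : ℕ} (hb : 0 < b)
    (h : 2 * Real.pi * b ^ 2 * Real.exp (b ^ 2) = (n : ℝ) ^ 2) :
    (n : ℝ) = √(2 * π) * b * Real.exp (b ^ 2 / 2) := by
  have h1 : (√(2 * π) * b * Real.exp (b ^ 2 / 2)) ^ 2 = (n : ℝ) ^ 2 := by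
    rw [← h, mul_pow, mul_pow, Real.sq_sqrt (by positivity), ← Real.exp_nat_mul]
    congr 2; push_cast; ring
  exact ((pow_left_inj₀ (by positivity) (by positivity) two_ne_zero).1 h1).symm

lemma pdf_eq {b : ℝ} {n : ℕ} (hb : 0 < b)
    (h : 2 * Real.pi * b ^ 2 * Real.exp (b ^ 2) = (n : ℝ) ^ 2) (x : ℝ) :
    (n : ℝ) * b⁻¹ * stdNormalPDF (b + x / b) = Real.exp (-x - x ^ 2 / (2 * b ^ 2)) := by
  rw [n_eq hb h, stdNormalPDF]
  have e : -(b + x / b) ^ 2 / 2 = - (b ^ 2 / 2) + (-x - x ^ 2 / (2 * b ^ 2)) := by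
    field_simp; ring
  rw [e, Real.exp_add, Real.exp_neg]
  have : √(2 * π) ≠ 0 := by positivity
  field_simp

lemma cdf_eq {b : ℝ} {n : ℕ} (hn : 1 ≤ n) (hb : 0 < b)
    (h : 2 * Real.pi * b ^ 2 * Real.exp (b ^ 2) = (n : ℝ) ^ 2) (x : ℝ) :
    stdNormalCDF (b + x / b) = 1 - TT (b ^ 2) x / n := by
  have hn' : (n : ℝ) ≠ 0 := by positivity
  have h1 := intervalIntegral.integral_Iic_add_Ioi (b := b + x / b) integrable_phi.integrableOn
    integrable_phi.integrableOn
  rw [integral_phi] at h1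
  have h2 : ∫ t in Set.Ioi (b + x / b), Real.exp (-t ^ 2 / 2) / Real.sqrt (2 * Real.pi)
      = TT (b ^ 2) x / n := by
    have h3 : TT (b ^ 2) x = ∫ y in Set.Ioi x, (n * b⁻¹) * stdNormalPDF (y * b⁻¹ + b) := by
      unfold TT
      congr 1; ext y; rw [← pdf_eq hb h, add_comm b, div_eq_mul_inv]
    rw [h3, integral_const_mul]
    have h4 := integral_comp_mul_right_Ioi (fun t => stdNormalPDF (t + b)) x (inv_pos.2 hb)
    rw [h4, inv_inv, smul_eq_mul]
    have h5 : ∫ t in Set.Ioi (x * b⁻¹), stdNormalPDF (t + b) = ∫ t in Set.Ioi (b + x / b), stdNormalPDF t := by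
      have := (measurePreserving_add_right volume b).setIntegral_preimage_emb
        (measurableEmbedding_addRight b) stdNormalPDF (Set.Ioi (b + x / b))
      rw [← this]; congr 3; ext t; simp only [Set.mem_Ioi, Set.mem_preimage, div_eq_mul_inv]
      constructor <;> intro h <;> linarith
    rw [h5]
    change ∫ t in Set.Ioi (b + x / b), stdNormalPDF t = _
    field_simp
  rw [← h2, ← h1, stdNormalCDF]; ring

lemma intOn_exp (x : ℝ) : IntegrableOn (fun y : ℝ => Real.exp (-y)) (Set.Ioi x) := by
  simpa using exp_neg_integrableOn_Ioi x (b := 1) one_pos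

lemma intOn_TT {β : ℝ} (hβ : 0 < β) (x : ℝ) :
    IntegrableOn (fun y : ℝ => Real.exp (-y - y ^ 2 / (2 * β))) (Set.Ioi x) := by
  refine Integrable.mono' (intOn_exp x) (by fun_prop) (Eventually.of_forall fun y => ?_)
  rw [Real.norm_eq_abs, abs_of_pos (Real.exp_pos _), Real.exp_le_exp]
  have : 0 ≤ y ^ 2 / (2 * β) := by positivity
  linarith

lemma TT_nonneg (β x : ℝ) : 0 ≤ TT β x := by
  unfold TT
  positivity

lemma quad_hasDerivAt (y : ℝ) : HasDerivAt
    (fun y : ℝ => -(Real.exp (-y) * (y ^ 2 + 2 * y + 2) / 2)) (Real.exp (-y) * y ^ 2 / 2) y := by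
  have h1 : HasDerivAt (fun y : ℝ => Real.exp (-y)) (-Real.exp (-y)) y := by
    simpa using (hasDerivAt_neg y).exp
  have h2 : HasDerivAt (fun y : ℝ => y ^ 2 + 2 * y + 2) (2 * y + 2) y := by
    simpa using (((hasDerivAt_pow 2 y).add ((hasDerivAt_id y).const_mul 2)).add_const 2)
  refine ((h1.mul h2).div_const 2).neg.congr_deriv ?_
  ring

lemma quad_tendsto : Tendsto (fun y : ℝ => -(Real.exp (-y) * (y ^ 2 + 2 * y + 2) / 2))
    atTop (nhds 0) := by
  have h2 := tendsto_pow_mul_exp_neg_atTop_nhds_zero 2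
  have h1 := tendsto_pow_mul_exp_neg_atTop_nhds_zero 1
  have h0 := tendsto_pow_mul_exp_neg_atTop_nhds_zero 0
  have := (((h2.add (h1.const_mul 2)).add (h0.const_mul 2)).div_const 2).neg
  simp only [mul_zero, add_zero, zero_div, neg_zero] at this
  refine this.congr fun y => ?_
  ring

lemma quad_intOn (x : ℝ) :
    IntegrableOn (fun y : ℝ => Real.exp (-y) * y ^ 2 / 2) (Set.Ioi x) :=
  integrableOn_Ioi_deriv_of_nonneg' (fun y _ => quad_hasDerivAt y) (fun y _ => by positivity)
    quad_tendsto

lemma quad_integral (x : ℝ) : ∫ y in Set.Ioi x, Real.exp (-y) * y ^ 2 / 2 =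
    Real.exp (-x) * (x ^ 2 + 2 * x + 2) / 2 := by
  rw [integral_Ioi_of_hasDerivAt_of_tendsto' (fun y _ => quad_hasDerivAt y) (quad_intOn x)
    quad_tendsto]
  ring

lemma E_sub_TT {β : ℝ} (hβ : 0 < β) (x : ℝ) : β * (Real.exp (-x) - TT β x) =
    ∫ y in Set.Ioi x, β * (Real.exp (-y) * (1 - Real.exp (-(y ^ 2 / (2 * β))))) := by
  rw [← integral_exp_neg_Ioi x, TT, ← integral_sub (intOn_exp x) (intOn_TT hβ x), integral_const_mul]
  congr 2; ext y
  rw [sub_eq_add_neg (-y), Real.exp_add]; ring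

lemma one_sub_exp_bd {β : ℝ} (hβ : 0 < β) (y : ℝ) :
    0 ≤ β * (1 - Real.exp (-(y ^ 2 / (2 * β)))) ∧
    β * (1 - Real.exp (-(y ^ 2 / (2 * β)))) ≤ y ^ 2 / 2 := by
  have h1 := Real.add_one_le_exp (-(y ^ 2 / (2 * β)))
  have h2 : Real.exp (-(y ^ 2 / (2 * β))) ≤ 1 := by
    rw [Real.exp_le_one_iff]
    have : 0 ≤ y ^ 2 / (2 * β) := by positivity
    linarith
  constructor
  · exact mul_nonneg hβ.le (by linarith)
  · calc _ ≤ β * (y ^ 2 / (2 * β)) := by gcongr; linarith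
      _ = _ := by field_simp

lemma bd_pt {β : ℝ} (hβ : 0 < β) (y : ℝ) :
    0 ≤ β * (Real.exp (-y) * (1 - Real.exp (-(y ^ 2 / (2 * β))))) ∧
    β * (Real.exp (-y) * (1 - Real.exp (-(y ^ 2 / (2 * β))))) ≤ Real.exp (-y) * y ^ 2 / 2 := by
  obtain ⟨h1, h2⟩ := one_sub_exp_bd hβ y
  have h3 := (Real.exp_pos (-y)).le
  constructor
  · nlinarith [mul_nonneg h3 h1]
  · nlinarith [mul_le_mul_of_nonneg_left h2 h3]

lemma E_sub_TT_bd {β : ℝ} (hβ : 0 < β) (x : ℝ) :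
    0 ≤ β * (Real.exp (-x) - TT β x) ∧
    β * (Real.exp (-x) - TT β x) ≤ Real.exp (-x) * (x ^ 2 + 2 * x + 2) / 2 := by
  rw [E_sub_TT hβ]
  constructor
  · exact integral_nonneg fun y => (bd_pt hβ y).1
  · rw [← quad_integral]
    exact integral_mono_of_nonneg (Eventually.of_forall fun y => (bd_pt hβ y).1) (quad_intOn x)
      (Eventually.of_forall fun y => (bd_pt hβ y).2)

lemma TT_le {β : ℝ} (hβ : 0 < β) (x : ℝ) : TT β x ≤ Real.exp (-x) := by
  have := (E_sub_TT_bd hβ x).1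
  have := nonneg_of_mul_nonneg_right this hβ
  linarith

lemma lim_one_sub_exp {β : ℕ → ℝ} (h : Tendsto β atTop atTop) (y : ℝ) :
    Tendsto (fun n => β n * (1 - Real.exp (-(y ^ 2 / (2 * β n))))) atTop (nhds (y ^ 2 / 2)) := by
  have h0 : Tendsto (fun n => y ^ 2 / 2 - (y ^ 2 / 2) ^ 2 * (β n)⁻¹) atTop (nhds (y ^ 2 / 2)) := by
    simpa using (tendsto_const_nhds (x := y ^ 2 / 2)).sub
      ((tendsto_inv_atTop_zero.comp h).const_mul ((y ^ 2 / 2) ^ 2))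
  refine tendsto_of_tendsto_of_tendsto_of_le_of_le' h0 tendsto_const_nhds ?_ ?_
  · filter_upwards [h.eventually_ge_atTop (y ^ 2 + 1)] with n hn
    have hβ : 0 < β n := by nlinarith [sq_nonneg y]
    have h1 : |-(y ^ 2 / (2 * β n))| ≤ 1 := by
      rw [abs_neg, abs_of_nonneg (by positivity), div_le_one (by positivity)]
      nlinarith [sq_nonneg y]
    have h2 := (abs_le.1 (Real.abs_exp_sub_one_sub_id_le h1)).2
    have h3 : β n * (y ^ 2 / (2 * β n) - (-(y ^ 2 / (2 * β n))) ^ 2) ≤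
        β n * (1 - Real.exp (-(y ^ 2 / (2 * β n)))) := by
      apply mul_le_mul_of_nonneg_left _ hβ.le; linarith
    refine le_trans (le_of_eq ?_) h3
    field_simp
  · filter_upwards [h.eventually_gt_atTop 0] with n hn
    exact (one_sub_exp_bd hn y).2

lemma lim_E_sub_TT {β : ℕ → ℝ} (h : Tendsto β atTop atTop) (x : ℝ) :
    Tendsto (fun n => β n * (Real.exp (-x) - TT (β n) x)) atTop
      (nhds (Real.exp (-x) * (x ^ 2 + 2 * x + 2) / 2)) := by
  rw [← quad_integral]
  have : Tendsto (fun n => ∫ y in Set.Ioi x, β n * (Real.exp (-y) * (1 - Real.exp (-(y ^ 2 / (2 * β n))))))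
      atTop (nhds (∫ y in Set.Ioi x, Real.exp (-y) * y ^ 2 / 2)) := by
    refine tendsto_integral_filter_of_dominated_convergence
      (fun y => Real.exp (-y) * y ^ 2 / 2) (Eventually.of_forall fun n => by fun_prop) ?_
      (quad_intOn x) (Eventually.of_forall fun y => ?_)
    · filter_upwards [h.eventually_gt_atTop 0] with n hn
      refine Eventually.of_forall fun y => ?_
      rw [Real.norm_eq_abs, abs_of_nonneg (bd_pt hn y).1]
      exact (bd_pt hn y).2
    · have := (lim_one_sub_exp h y).const_mul (Real.exp (-y))
      rw [← mul_div_assoc] at this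
      refine this.congr fun n => by ring
  refine this.congr' ?_
  filter_upwards [h.eventually_gt_atTop 0] with n hn
  rw [E_sub_TT hn]

lemma TT_lower {β x : ℝ} (hβ : 0 < β) (hx : x ≤ 0) (hx' : -4 * β ≤ x) :
    2 * (Real.exp (-x / 8) - 1) ≤ TT β x := by
  have h1 : ∫ y in (x/4)..0, Real.exp (-y / 2) = 2 * (Real.exp (-x / 8) - 1) := by
    rw [intervalIntegral.integral_eq_sub_of_hasDerivAt (f := fun y => -2 * Real.exp (-y / 2))]
    · simp; ring_nf
    · intro y _
      have : HasDerivAt (fun y : ℝ => -y / 2) (-1 / 2) y := (hasDerivAt_neg y).div_const 2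
      exact (this.exp.const_mul (-2)).congr_deriv (by ring)
    · exact Continuous.intervalIntegrable (by fun_prop) _ _
  rw [← h1, intervalIntegral.integral_of_le (by linarith), TT]
  calc _ ≤ ∫ y in Set.Ioc (x/4) 0, Real.exp (-y - y ^ 2 / (2 * β)) := by
        refine setIntegral_mono_on ?_ ?_ measurableSet_Ioc ?_
        · exact (Continuous.integrableOn_Icc (by fun_prop)).mono_set Set.Ioc_subset_Icc_self
        · exact (Continuous.integrableOn_Icc (by fun_prop)).mono_set Set.Ioc_subset_Icc_self
        · intro y hy
          rw [Real.exp_le_exp]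
          have : y ^ 2 / (2 * β) ≤ -y / 2 := by
            rw [div_le_div_iff₀ (by positivity) (by norm_num)]
            nlinarith [hy.1, hy.2]
          linarith
    _ ≤ _ := by
        refine setIntegral_mono_set (intOn_TT hβ x) (Eventually.of_forall fun y => (Real.exp_pos _).le) ?_
        refine (LE.le.eventuallyLE ?_)
        intro y hy
        simp only [Set.mem_Ioi]
        linarith [hy.1]

lemma pow_bounds {n : ℕ} (hn : 1 ≤ n) {T : ℝ} (h0 : 0 ≤ T) (h1 : T ≤ n) :
    0 ≤ (1 - T / n) ^ (n - 1) ∧ (1 - T / n) ^ (n - 1) ≤ 3 * Real.exp (-T) ∧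
    |(1 - T / n) ^ (n - 1) - Real.exp (-T)| ≤ Real.exp (-T) * ((3 * T + T ^ 2) / n) := by
  have hn' : (0 : ℝ) < n := by positivity
  obtain ⟨p, hp⟩ : ∃ p, p = T / n := ⟨_, rfl⟩
  have hT : T = n * p := by rw [hp]; field_simp
  have p0 : 0 ≤ p := by rw [hp]; positivity
  have p1 : p ≤ 1 := by rw [hp, div_le_one hn']; exact h1
  rw [← hp]
  have hq : 0 ≤ 1 - p := by linarith
  have e1 : Real.exp 1 ≤ 3 := by linarith [Real.exp_one_lt_d9]
  have ep : Real.exp p ≤ 3 := (Real.exp_le_exp.2 p1).trans e1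
  have up : (1 - p) ^ (n - 1) ≤ Real.exp (-T) * Real.exp p := by
    calc (1 - p) ^ (n - 1) ≤ (Real.exp (-p)) ^ (n - 1) := by
          gcongr; linarith [Real.add_one_le_exp (-p)]
      _ = _ := by
          rw [← Real.exp_nat_mul, ← Real.exp_add, Nat.cast_sub hn, hT]
          congr 1; push_cast; ring
  have eT := Real.exp_pos (-T)
  refine ⟨by positivity, by nlinarith, abs_le.2 ⟨?_, ?_⟩⟩
  · have l1 : (1 - p) ^ n ≤ (1 - p) ^ (n - 1) :=
      pow_le_pow_of_le_one hq (by linarith) (Nat.sub_le _ _)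
    have l2 : Real.exp (-T) * (1 - n * p ^ 2) ≤ (1 - p) ^ n := by
      have b1 : 1 + (n : ℝ) * (-p ^ 2) ≤ (1 + (-p ^ 2)) ^ n :=
        one_add_mul_le_pow (by nlinarith) n
      have b2 : (1 - p) ^ n ≥ (Real.exp (-p) * (1 - p ^ 2)) ^ n := by
        apply pow_le_pow_left₀
        · apply mul_nonneg (Real.exp_pos _).le; nlinarith
        · have := Real.add_one_le_exp p
          rw [Real.exp_neg]
          rw [inv_mul_le_iff₀ (Real.exp_pos _)]
          nlinarith
      rw [mul_pow, ← Real.exp_nat_mul] at b2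
      have b3 : (n : ℝ) * -p = -T := by rw [hT]; ring
      rw [b3] at b2
      have : 1 + -p ^ 2 = 1 - p ^ 2 := by ring
      rw [this] at b1
      nlinarith
    have l3 : (3 * T + T ^ 2) / n = 3 * p + n * p ^ 2 := by rw [hT]; field_simp
    rw [l3]
    nlinarith [mul_nonneg eT.le p0]
  · have l3 : (3 * T + T ^ 2) / n = 3 * p + n * p ^ 2 := by rw [hT]; field_simp
    rw [l3]
    have l4 : Real.exp p - 1 ≤ 3 * p := by
      have := Real.add_one_le_exp (-p)
      have h5 : Real.exp p * Real.exp (-p) = 1 := by rw [← Real.exp_add]; simp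
      nlinarith [Real.exp_pos p]
    nlinarith [mul_nonneg eT.le (mul_nonneg hn'.le (sq_nonneg p)), mul_le_mul_of_nonneg_left l4 eT.le]

lemma main_bd {n : ℕ} (hn : 1 ≤ n) {β x : ℝ} (hβ : 0 < β) (hβn : β ≤ n) (hT : TT β x ≤ n) :
    β * |Real.exp (-x - x ^ 2 / (2 * β)) * (1 - TT β x / n) ^ (n - 1) - gumbelPDF x| ≤
    Real.exp (-x) * Real.exp (-TT β x) * (3 * x ^ 2 / 2 + 3 * TT β x + TT β x ^ 2 +
      Real.exp (-x) * (x ^ 2 + 2 * x + 2) / 2) := by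
  have hn' : (0 : ℝ) < n := by positivity
  obtain ⟨P0, P1, P2⟩ := pow_bounds hn (TT_nonneg β x) hT
  obtain ⟨D0, D1⟩ := one_sub_exp_bd hβ x
  obtain ⟨A0, A1⟩ := E_sub_TT_bd hβ x
  have T0 := TT_nonneg β x
  have TE := TT_le hβ x
  rw [gumbelPDF, sub_eq_add_neg (-x), sub_eq_add_neg (-x), Real.exp_add, Real.exp_add]
  generalize TT β x = T at *
  generalize (1 - T / n) ^ (n - 1) = P at *
  generalize Real.exp (-(x ^ 2 / (2 * β))) = D at *
  have E0 := Real.exp_pos (-x)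
  generalize Real.exp (-x) = E at *
  have t2 : β * |P - Real.exp (-T)| ≤ Real.exp (-T) * (3 * T + T ^ 2) := by
    calc β * |P - Real.exp (-T)| ≤ n * (Real.exp (-T) * ((3 * T + T ^ 2) / n)) := by gcongr
      _ = _ := by field_simp
  have t3 : β * |Real.exp (-T) - Real.exp (-E)| ≤ Real.exp (-T) * (E * (x ^ 2 + 2 * x + 2) / 2) := by
    have h1 : Real.exp (-E) ≤ Real.exp (-T) := Real.exp_le_exp.2 (by linarith)
    rw [abs_of_nonneg (by linarith)]
    have h2 : Real.exp (-E) = Real.exp (-T) * Real.exp (-(E - T)) := by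
      rw [← Real.exp_add]; ring_nf
    have h3 := Real.add_one_le_exp (-(E - T))
    have h4 : Real.exp (-T) - Real.exp (-E) ≤ Real.exp (-T) * (E - T) := by
      rw [h2]; nlinarith [Real.exp_pos (-T)]
    calc β * (Real.exp (-T) - Real.exp (-E)) ≤ β * (Real.exp (-T) * (E - T)) := by gcongr
      _ = Real.exp (-T) * (β * (E - T)) := by ring
      _ ≤ _ := by gcongr
  have t1 : β * (1 - D) * P ≤ Real.exp (-T) * (3 * x ^ 2 / 2) := by
    calc β * (1 - D) * P ≤ (x ^ 2 / 2) * (3 * Real.exp (-T)) := by gcongr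
      _ = _ := by ring
  have key : |D * P - Real.exp (-E)| ≤ (1 - D) * P + |P - Real.exp (-T)| + |Real.exp (-T) - Real.exp (-E)| := by
    have : D * P - Real.exp (-E) = -((1 - D) * P) + (P - Real.exp (-T)) + (Real.exp (-T) - Real.exp (-E)) := by ring
    rw [this]
    refine (abs_add_three _ _ _).trans ?_
    rw [abs_neg, abs_of_nonneg (mul_nonneg (nonneg_of_mul_nonneg_right D0 hβ) P0)]
  have : E * D * P - E * Real.exp (-E) = E * (D * P - Real.exp (-E)) := by ring
  rw [this, abs_mul, abs_of_pos E0]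
  calc β * (E * |D * P - Real.exp (-E)|) ≤ β * (E * ((1 - D) * P + |P - Real.exp (-T)| + |Real.exp (-T) - Real.exp (-E)|)) := by gcongr
    _ = E * (β * (1 - D) * P + β * |P - Real.exp (-T)| + β * |Real.exp (-T) - Real.exp (-E)|) := by ring
    _ ≤ E * (Real.exp (-T) * (3 * x ^ 2 / 2) + Real.exp (-T) * (3 * T + T ^ 2) + Real.exp (-T) * (E * (x ^ 2 + 2 * x + 2) / 2)) := by gcongr
    _ = _ := by ring

lemma dom_bd {n : ℕ} (hn : 1 ≤ n) {β x : ℝ} (hβ : 0 < β) (hβn : β ≤ n) (hT : TT β x ≤ n) :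
    β * |Real.exp (-x - x ^ 2 / (2 * β)) * (1 - TT β x / n) ^ (n - 1) - gumbelPDF x| ≤
    (8 * Real.exp 200 + 16) * Real.exp (-|x| / 2) := by
  have hn' : (0 : ℝ) < n := by positivity
  have T0 := TT_nonneg β x
  have TE := TT_le hβ x
  rcases le_total 0 x with hx | hx
  · refine (main_bd hn hβ hβn hT).trans ?_
    rw [abs_of_nonneg hx]
    have E1 : Real.exp (-x) ≤ 1 := by rw [Real.exp_le_one_iff]; linarith
    have eT : Real.exp (-TT β x) ≤ 1 := by rw [Real.exp_le_one_iff]; linarith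
    have T1 : TT β x ≤ 1 := TE.trans E1
    generalize TT β x = T at *
    have q := Real.quadratic_le_exp_of_nonneg (x := x / 2) (by positivity)
    have h1 : Real.exp (-x) = Real.exp (-x/2) * Real.exp (-x/2) := by rw [← Real.exp_add]; ring_nf
    have h2 : Real.exp (-x/2) * Real.exp (x/2) = 1 := by rw [← Real.exp_add]; ring_nf; simp
    calc _ ≤ Real.exp (-x) * 1 * (3 * x ^ 2 / 2 + 3 * 1 + 1 ^ 2 + 1 * (x ^ 2 + 2 * x + 2) / 2) := by
          gcongr
      _ = Real.exp (-x/2) * (Real.exp (-x/2) * (2 * x ^ 2 + x + 5)) := by rw [h1]; ring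
      _ ≤ Real.exp (-x/2) * (Real.exp (-x/2) * (16 * Real.exp (x/2))) := by
          gcongr; nlinarith
      _ = 16 * Real.exp (-x/2) := by linear_combination 16 * Real.exp (-x/2) * h2
      _ ≤ _ := by gcongr; linarith [Real.exp_pos 200]
  · obtain ⟨s, rfl⟩ : ∃ s, x = -s := ⟨-x, by ring⟩
    have hs : 0 ≤ s := by linarith
    rw [abs_neg, abs_of_nonneg hs]
    rcases le_total (-4 * β) (-s) with h4 | h4
    · refine (main_bd hn hβ hβn hT).trans ?_
      have TL := TT_lower hβ hx h4
      generalize TT β (-s) = T at *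
      rw [neg_neg] at *
      have q := Real.quadratic_le_exp_of_nonneg hs
      have q8 := Real.quadratic_le_exp_of_nonneg (x := s / 8) (by positivity)
      have E1 : 1 ≤ Real.exp s := Real.one_le_exp hs
      have br : 3 * (-s) ^ 2 / 2 + 3 * T + T ^ 2 + Real.exp s * ((-s) ^ 2 + 2 * (-s) + 2) / 2 ≤
          8 * Real.exp s ^ 2 := by
        nlinarith
      calc _ ≤ Real.exp s * Real.exp (-T) * (8 * Real.exp s ^ 2) := by gcongr
        _ = 8 * Real.exp (3 * s - T) := by
          rw [← Real.exp_nat_mul, mul_comm, mul_assoc, ← Real.exp_add, ← Real.exp_add]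
          congr 2; push_cast; ring
        _ ≤ 8 * Real.exp (200 + -s / 2) := by
          gcongr
          nlinarith [sq_nonneg (s - 112)]
        _ = 8 * Real.exp 200 * Real.exp (-s / 2) := by rw [Real.exp_add]; ring
        _ ≤ _ := by gcongr; linarith
    · have P0 : 0 ≤ 1 - TT β (-s) / n := by
        rw [sub_nonneg, div_le_one hn']; exact hT
      have P1 : (1 - TT β (-s) / n) ^ (n - 1) ≤ 1 := by
        apply pow_le_one₀ P0
        have : 0 ≤ TT β (-s) / n := by positivity
        linarith
      have f1 : Real.exp (- -s - (-s) ^ 2 / (2 * β)) ≤ Real.exp (-s) := by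
        rw [Real.exp_le_exp]
        have : 2 * s ≤ (-s) ^ 2 / (2 * β) := by
          rw [le_div_iff₀ (by positivity)]; nlinarith
        linarith
      have g1 : s * gumbelPDF (-s) ≤ Real.exp 2 * Real.exp (-s / 2) := by
        have q := Real.quadratic_le_exp_of_nonneg hs
        have q1 := Real.add_one_le_exp s
        calc s * gumbelPDF (-s) ≤ Real.exp s * gumbelPDF (-s) := by
              unfold gumbelPDF; gcongr; linarith
          _ ≤ _ := by
              rw [gumbelPDF, ← Real.exp_add, ← Real.exp_add, Real.exp_le_exp, neg_neg]
              nlinarith [sq_nonneg (s - 3/2)]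
      have g0 : 0 ≤ gumbelPDF (-s) := (Real.exp_pos _).le
      have fs : s * Real.exp (-s) ≤ 2 * Real.exp (-s / 2) := by
        have h1 : Real.exp (-s) = Real.exp (-s/2) * Real.exp (-s/2) := by rw [← Real.exp_add]; ring_nf
        have h2 : Real.exp (-s/2) * Real.exp (s/2) = 1 := by rw [← Real.exp_add]; ring_nf; simp
        have := Real.add_one_le_exp (s / 2)
        calc s * Real.exp (-s) ≤ (2 * Real.exp (s/2)) * Real.exp (-s) := by gcongr; linarith
          _ = 2 * Real.exp (-s/2) := by rw [h1]; linear_combination 2 * Real.exp (-s/2) * h2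
      have βs : β ≤ s := by linarith
      have e2 : Real.exp 2 ≤ Real.exp 200 := Real.exp_le_exp.2 (by norm_num)
      calc _ ≤ s * (Real.exp (-s) * 1 + gumbelPDF (-s)) := by
            gcongr
            refine (abs_sub _ _).trans ?_
            rw [abs_of_nonneg g0, abs_of_nonneg (by positivity)]
            gcongr
        _ ≤ 2 * Real.exp (-s / 2) + Real.exp 2 * Real.exp (-s / 2) := by linarith
        _ ≤ _ := by nlinarith [Real.exp_pos (-s/2), Real.exp_pos 200]

lemma integrable_bd : Integrable (fun x : ℝ => (8 * Real.exp 200 + 16) * Real.exp (-|x| / 2)) := by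
  apply Integrable.const_mul
  have h1 : IntegrableOn (fun x : ℝ => Real.exp (-|x| / 2)) (Set.Ioi 0) := by
    refine (exp_neg_integrableOn_Ioi 0 (b := 1/2) (by norm_num)).congr_fun (fun x hx => ?_) measurableSet_Ioi
    simp only
    rw [abs_of_pos hx]; congr 1; ring
  have h2 : IntegrableOn (fun x : ℝ => Real.exp (-|x| / 2)) (Set.Iic 0) := by
    refine (integrableOn_exp_mul_Iic (a := 1/2) (by norm_num) 0).congr_fun (fun x hx => ?_)
      measurableSet_Iic
    simp only
    rw [abs_of_nonpos hx]; congr 1; ring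
  rw [← integrableOn_univ, ← Set.Iic_union_Ioi (a := (0:ℝ))]
  exact h2.union h1

lemma TT_anti {β : ℝ} (hβ : 0 < β) : Antitone (TT β) := by
  intro x y hxy
  refine setIntegral_mono_set (intOn_TT hβ x) (Eventually.of_forall fun y => (Real.exp_pos _).le) ?_
  exact LE.le.eventuallyLE (Set.Ioi_subset_Ioi hxy)

lemma lim_pt {β : ℕ → ℝ} (h : Tendsto β atTop atTop)
    (h' : Tendsto (fun n : ℕ => β n / n) atTop (nhds 0)) (x : ℝ)
    (hT : ∀ᶠ n : ℕ in atTop, TT (β n) x ≤ n) :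
    Tendsto (fun n : ℕ => β n * (Real.exp (-x - x ^ 2 / (2 * β n)) * (1 - TT (β n) x / n) ^ (n - 1)
      - gumbelPDF x)) atTop
    (nhds (Real.exp (-x - Real.exp (-x)) * (-x ^ 2 + Real.exp (-x) * (x ^ 2 + 2 * x + 2)) / 2)) := by
  have hinv : Tendsto (fun n => (β n)⁻¹) atTop (nhds 0) := tendsto_inv_atTop_zero.comp h
  have hA := lim_E_sub_TT h x
  have hpos := h.eventually_gt_atTop 0
  -- δ → 0
  have hδ : Tendsto (fun n => Real.exp (-x) - TT (β n) x) atTop (nhds 0) := by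
    have := hA.mul hinv
    rw [mul_zero] at this
    refine this.congr' ?_
    filter_upwards [hpos] with n hn
    field_simp
  have hTT : Tendsto (fun n => TT (β n) x) atTop (nhds (Real.exp (-x))) := by
    have := (tendsto_const_nhds (x := Real.exp (-x))).sub hδ
    simpa using this
  have heT : Tendsto (fun n => Real.exp (-TT (β n) x)) atTop (nhds (Real.exp (-Real.exp (-x)))) :=
    (Real.continuous_exp.tendsto _).comp hTT.neg
  have t2 : Tendsto (fun n : ℕ => β n * ((1 - TT (β n) x / n) ^ (n - 1) - Real.exp (-TT (β n) x)))
      atTop (nhds 0) := by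
    have hb : Tendsto (fun n : ℕ => Real.exp (-TT (β n) x) * (3 * TT (β n) x + TT (β n) x ^ 2) *
        (β n / n)) atTop (nhds 0) := by
      have := (heT.mul ((hTT.const_mul 3).add (hTT.pow 2))).mul h'
      rwa [mul_zero] at this
    refine squeeze_zero_norm' ?_ hb
    filter_upwards [hpos, hT, eventually_ge_atTop 1] with n hn hTn h1
    obtain ⟨-, -, P2⟩ := pow_bounds h1 (TT_nonneg (β n) x) hTn
    rw [Real.norm_eq_abs, abs_mul, abs_of_pos hn]
    calc _ ≤ β n * (Real.exp (-TT (β n) x) * ((3 * TT (β n) x + TT (β n) x ^ 2) / n)) := by gcongr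
      _ = _ := by ring
  have hP : Tendsto (fun n : ℕ => (1 - TT (β n) x / n) ^ (n - 1)) atTop
      (nhds (Real.exp (-Real.exp (-x)))) := by
    have := (t2.mul hinv).add heT
    rw [mul_zero, zero_add] at this
    refine this.congr' ?_
    filter_upwards [hpos] with n hn
    field_simp
    ring
  have t1 := (lim_one_sub_exp h x).mul hP
  have t3 : Tendsto (fun n => β n * (Real.exp (-TT (β n) x) - Real.exp (-Real.exp (-x)))) atTop
      (nhds (Real.exp (-Real.exp (-x)) * (Real.exp (-x) * (x ^ 2 + 2 * x + 2) / 2))) := by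
    have r : Tendsto (fun n => β n * (Real.exp (Real.exp (-x) - TT (β n) x) - 1 -
        (Real.exp (-x) - TT (β n) x))) atTop (nhds 0) := by
      have hb := hA.mul hδ
      rw [mul_zero] at hb
      refine squeeze_zero_norm' ?_ hb
      have hsm := hδ.eventually (Metric.closedBall_mem_nhds (0:ℝ) one_pos)
      filter_upwards [hpos, hsm] with n hn h1
      rw [dist_zero_right, Real.norm_eq_abs] at h1
      rw [Real.norm_eq_abs, abs_mul, abs_of_pos hn, mul_assoc, ← pow_two]
      gcongr
      exact Real.abs_exp_sub_one_sub_id_le h1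
    have := (r.add hA).const_mul (Real.exp (-Real.exp (-x)))
    rw [zero_add] at this
    refine this.congr fun n => ?_
    have e : Real.exp (-TT (β n) x) = Real.exp (-Real.exp (-x)) * Real.exp (Real.exp (-x) - TT (β n) x) := by
      rw [← Real.exp_add]; ring_nf
    rw [e]; ring
  have := ((t1.neg.add t2).add t3).const_mul (Real.exp (-x))
  have hl : Real.exp (-x) * (-(x ^ 2 / 2 * Real.exp (-Real.exp (-x))) + 0 +
      Real.exp (-Real.exp (-x)) * (Real.exp (-x) * (x ^ 2 + 2 * x + 2) / 2)) =
      Real.exp (-x - Real.exp (-x)) * (-x ^ 2 + Real.exp (-x) * (x ^ 2 + 2 * x + 2)) / 2 := by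
    rw [sub_eq_add_neg (-x), Real.exp_add]; ring
  rw [hl] at this
  refine this.congr fun n => ?_
  rw [gumbelPDF, sub_eq_add_neg (-x), sub_eq_add_neg (-x), Real.exp_add, Real.exp_add]
  ring

/-- If `b_n > 0` solves `2π b_n² exp(b_n²) = n²` and `Y_n = b_n(X_{(n)} - b_n)`, whose
density is `f_n(x) = n b_n⁻¹ φ(b_n + x/b_n) Φ(b_n + x/b_n)^{n-1}`, then
`‖L(Y_n) - Λ‖_TV = (d₃/(4 log n)) (1 + o(1))` with
`d₃ = ∫ e^{-x - e^{-x}} |−x² + e^{-x}(x² + 2x + 2)| dx`. -/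
theorem hall_tv (b : ℕ → ℝ)
    (hb : ∀ n : ℕ, 1 ≤ n → 0 < b n ∧
      2 * Real.pi * (b n) ^ 2 * Real.exp ((b n) ^ 2) = (n : ℝ) ^ 2) :
    Tendsto (fun n : ℕ =>
        (∫ x : ℝ, |(n : ℝ) * (b n)⁻¹ * stdNormalPDF (b n + x / b n) *
            stdNormalCDF (b n + x / b n) ^ (n - 1) - gumbelPDF x|) /
          ((∫ x : ℝ, Real.exp (-x - Real.exp (-x)) *
              |-x ^ 2 + Real.exp (-x) * (x ^ 2 + 2 * x + 2)|) / (4 * Real.log n)))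
      atTop (nhds 1) := by
  obtain ⟨β, hβdef⟩ : ∃ β : ℕ → ℝ, ∀ n, β n = b n ^ 2 := ⟨fun n => b n ^ 2, fun _ => rfl⟩
  have βpos : ∀ n, 1 ≤ n → 0 < β n := fun n hn => by
    rw [hβdef]; have := (hb n hn).1; positivity
  have βeq : ∀ n : ℕ, 1 ≤ n → 2 * Real.pi * β n * Real.exp (β n) = (n : ℝ) ^ 2 := fun n hn => by
    rw [hβdef]; exact (hb n hn).2
  have pi3 := Real.pi_gt_three
  have βcube : ∀ n : ℕ, 1 ≤ n → β n ^ 2 * (β n + 1) ≤ (n : ℝ) ^ 2 := fun n hn => by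
    have h0 := βpos n hn
    rw [← βeq n hn]
    have q := Real.quadratic_le_exp_of_nonneg h0.le
    have : β n * (β n + 1) ≤ 6 * Real.exp (β n) := by nlinarith
    calc β n ^ 2 * (β n + 1) = β n * (β n * (β n + 1)) := by ring
      _ ≤ β n * (6 * Real.exp (β n)) := by gcongr
      _ = 2 * 3 * β n * Real.exp (β n) := by ring
      _ ≤ _ := by gcongr
  have βn : ∀ n : ℕ, 1 ≤ n → β n ≤ n := fun n hn => by
    have h0 := βpos n hn
    have := βcube n hn
    exact le_of_sq_le_sq (by nlinarith [sq_nonneg (β n)]) (by positivity)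
  have hβ : Tendsto β atTop atTop := by
    rw [tendsto_atTop]
    intro M
    have hn : Tendsto (fun n : ℕ => (n : ℝ) ^ 2) atTop atTop :=
      (tendsto_pow_atTop two_ne_zero).comp tendsto_natCast_atTop_atTop
    filter_upwards [hn.eventually_gt_atTop (2 * π * M * Real.exp M), eventually_ge_atTop 1]
      with n h1 h2
    by_contra hlt
    push Not at hlt
    have h0 := βpos n h2
    rw [← βeq n h2] at h1
    have hM : 0 < M := h0.trans hlt
    have : 2 * π * β n * Real.exp (β n) ≤ 2 * π * M * Real.exp M := by gcongr
    linarith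
  have hβn : Tendsto (fun n : ℕ => β n / n) atTop (nhds 0) := by
    have hs : Tendsto (fun n : ℕ => √((β n)⁻¹)) atTop (nhds 0) := by
      have := (Real.continuous_sqrt.tendsto 0).comp (tendsto_inv_atTop_zero.comp hβ)
      rw [Real.sqrt_zero] at this
      exact this
    refine squeeze_zero_norm' ?_ hs
    filter_upwards [eventually_ge_atTop 1] with n h2
    have h0 := βpos n h2
    have hc := βcube n h2
    have hn' : (0 : ℝ) < n := by positivity
    rw [Real.norm_eq_abs, abs_of_nonneg (by positivity)]
    apply Real.le_sqrt_of_sq_le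
    rw [div_pow, div_le_iff₀ (by positivity), inv_mul_eq_div, le_div_iff₀ h0]
    nlinarith [sq_nonneg (β n)]
  have hlog : Tendsto (fun n : ℕ => 4 * Real.log n / β n) atTop (nhds 2) := by
    have l1 : Tendsto (fun n => Real.log (β n) / β n) atTop (nhds 0) :=
      (Real.isLittleO_log_id_atTop.tendsto_div_nhds_zero).comp hβ
    have l2 : Tendsto (fun n => Real.log (2 * π) * (β n)⁻¹) atTop (nhds 0) := by
      simpa using (tendsto_inv_atTop_zero.comp hβ).const_mul (Real.log (2 * π))
    have := ((l2.add l1).add_const 1).const_mul 2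
    norm_num at this
    refine this.congr' ?_
    filter_upwards [eventually_ge_atTop 1] with n h2
    have h0 := βpos n h2
    have hl : 2 * Real.log n = Real.log (2 * π) + Real.log (β n) + β n := by
      have := congrArg Real.log (βeq n h2)
      rw [Real.log_mul (by positivity) (by positivity), Real.log_mul (by positivity) (by positivity),
        Real.log_exp, Real.log_pow] at this
      push_cast at this
      linarith
    field_simp
    linarith
  have hTn : ∀ n : ℕ, 1 ≤ n → ∀ x, TT (β n) x ≤ n := fun n hn x => by
    have h1 := cdf_eq hn (hb n hn).1 (hb n hn).2 x
    have h2 : 0 ≤ stdNormalCDF (b n + x / b n) := by unfold stdNormalCDF; positivity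
    rw [h1, ← hβdef, sub_nonneg, div_le_one (by positivity)] at h2
    exact h2
  set L : ℝ → ℝ := fun x => Real.exp (-x - Real.exp (-x)) *
    |-x ^ 2 + Real.exp (-x) * (x ^ 2 + 2 * x + 2)| with hL
  have hpt : ∀ x, Tendsto (fun n : ℕ => β n * |Real.exp (-x - x ^ 2 / (2 * β n)) *
      (1 - TT (β n) x / n) ^ (n - 1) - gumbelPDF x|) atTop (nhds (L x / 2)) := fun x => by
    have hT : ∀ᶠ n : ℕ in atTop, TT (β n) x ≤ n := by
      filter_upwards [eventually_ge_atTop 1] with n hn using hTn n hn x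
    have := (lim_pt hβ hβn x hT).abs
    rw [abs_div, abs_mul, abs_of_pos (Real.exp_pos _), abs_of_pos (two_pos : (0:ℝ) < 2)] at this
    refine this.congr' ?_
    filter_upwards [eventually_ge_atTop 1] with n hn
    rw [abs_mul, abs_of_pos (βpos n hn)]
  have hint : Tendsto (fun n : ℕ => ∫ x, β n * |Real.exp (-x - x ^ 2 / (2 * β n)) *
      (1 - TT (β n) x / n) ^ (n - 1) - gumbelPDF x|) atTop (nhds (∫ x, L x / 2)) := by
    refine tendsto_integral_filter_of_dominated_convergence
      (fun x : ℝ => (8 * Real.exp 200 + 16) * Real.exp (-|x| / 2)) ?_ ?_ integrable_bd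
      (Eventually.of_forall hpt)
    · filter_upwards [eventually_ge_atTop 1] with n hn
      have hm : Measurable (TT (β n)) := (TT_anti (βpos n hn)).measurable
      unfold gumbelPDF
      exact Measurable.aestronglyMeasurable (by fun_prop)
    · filter_upwards [eventually_ge_atTop 1] with n hn
      refine Eventually.of_forall fun x => ?_
      have h0 := βpos n hn
      rw [Real.norm_eq_abs, abs_of_nonneg (by positivity)]
      exact dom_bd hn h0 (βn n hn) (hTn n hn x)
  have Lcont : Continuous L := by rw [hL]; fun_prop
  have L0 : 0 ≤ L := fun x => by rw [hL]; positivity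
  have Lint : Integrable L := by
    refine Integrable.mono' (integrable_bd.const_mul 2) Lcont.aestronglyMeasurable
      (Eventually.of_forall fun x => ?_)
    rw [Real.norm_eq_abs, abs_of_nonneg (L0 x)]
    have := le_of_tendsto (hpt x) (b := (8 * Real.exp 200 + 16) * Real.exp (-|x| / 2)) (by
      filter_upwards [eventually_ge_atTop 1] with n hn
      exact dom_bd hn (βpos n hn) (βn n hn) (hTn n hn x))
    linarith
  have Lpos : 0 < ∫ x, L x := by
    refine integral_pos_of_integrable_nonneg_nonzero (x := 0) Lcont Lint L0 ?_
    simp [hL]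
  have hfin := (hint.mul hlog).div_const (∫ x, L x)
  have e1 : (∫ x, L x / 2) * 2 / (∫ x, L x) = 1 := by
    rw [integral_div]; field_simp
  rw [e1] at hfin
  refine hfin.congr' ?_
  filter_upwards [eventually_ge_atTop 1] with n hn
  have h0 := βpos n hn
  have e2 : ∀ x, (n : ℝ) * (b n)⁻¹ * stdNormalPDF (b n + x / b n) *
      stdNormalCDF (b n + x / b n) ^ (n - 1) = Real.exp (-x - x ^ 2 / (2 * β n)) *
      (1 - TT (β n) x / n) ^ (n - 1) := fun x => by
    rw [pdf_eq (hb n hn).1 (hb n hn).2, cdf_eq hn (hb n hn).1 (hb n hn).2, hβdef]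
  simp only [e2]
  rw [integral_const_mul]
  field_simp
end
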